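/- (Chen–Stein approximation.) Let I be a finite index set and W = Σ_{i∈I} Z_i, where each Z_i is a Bernoulli random variable with parameter p_i ∈ [0,1], and let λ = Σ_{i∈I} p_i. Assume that for each i ∈ I there is a pair of coupled integer-valued random variables (U_i, V_i) such that U_i has the distribution of W and V_i + 1 has the distribution of W conditioned on Z_i = 1. Then d_TV(W, Po(λ)) ≤ min{1, λ^{−1}} · Σ_{i∈I} p_i · E(|U_i − V_i|). -/

import Mathlib

/-!
The distance is `P(W ∈ A) - Po(r)(A)` for a single set `A`. Stein's equation
`r * g j - j * g (j - 1) = 1_A(j) - Po(r)(A)` is solved by a multiple of the covariance, relative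
to the mass at `j`, of the indicators of `A` and `{0, …, j}`. Log-concavity of the Poisson masses
bounds the increments of `g` above by `(1 - exp (-r)) / r ≤ min 1 r⁻¹`; as `g` changes sign when
`A` is replaced by its complement, they are bounded below as well. Conditioning on `Z i = 1` turns
`E[W * g (W - 1)]` into `∑ i, p i * E[g (V i)]`, so the distance is
`∑ i, p i * E[g (U i) - g (V i)]`, to which the Lipschitz bound on `g` applies.
-/

open MeasureTheory

/-- The Poisson probability mass function with mean `lam`. -/
noncomputable def poissonPMF (lam : ℝ) (i : ℕ) : ℝ :=
  Real.exp (-lam) * lam ^ i / (Nat.factorial i)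

open ProbabilityTheory (poissonMeasure poissonMeasure_real_singleton
  poissonMeasure_real_singleton_pos IdentDistrib)
open Set
open scoped NNReal

lemma measureReal_inter_singleton {α : Type*} [MeasurableSpace α] (P : Measure α) (A : Set α)
    (a : α) : P.real (A ∩ {a}) = A.indicator 1 a * P.real {a} := by
  by_cases ha : a ∈ A
  · simp [ha, inter_eq_right.2 (singleton_subset_iff.2 ha)]
  · simp [ha, inter_singleton_eq_empty.2 ha]

section Countable

variable {α : Type*} [MeasurableSpace α] [MeasurableSingletonClass α] [Countable α]

lemma hasSum_indicator_measureReal_singleton (P : Measure α) [IsFiniteMeasure P] (A : Set α) :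
    HasSum (A.indicator fun a ↦ P.real {a}) (P.real A) := by
  have hsum := P.tsum_indicator_apply_singleton A A.to_countable.measurableSet
  have htop : ∑' a, A.indicator (fun a ↦ P {a}) a ≠ ⊤ := hsum ▸ measure_ne_top P A
  have hreal := ENNReal.hasSum_toReal htop
  rw [← ENNReal.tsum_toReal_eq (ENNReal.ne_top_of_tsum_ne_top htop), hsum] at hreal
  refine hreal.congr_fun fun a ↦ ?_
  by_cases ha : a ∈ A <;> simp [ha, measureReal_def]

lemma mul_measureReal_le_mul_measureReal {P Q : Measure α} [IsFiniteMeasure P]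
    [IsFiniteMeasure Q] {A : Set α} {x y : ℝ}
    (h : ∀ a ∈ A, x * P.real {a} ≤ y * Q.real {a}) : x * P.real A ≤ y * Q.real A := by
  refine hasSum_le (fun a ↦ ?_) ((hasSum_indicator_measureReal_singleton P A).mul_left x)
    ((hasSum_indicator_measureReal_singleton Q A).mul_left y)
  by_cases ha : a ∈ A <;> simp [ha, h]

lemma exists_half_tsum_abs_measureReal_sub_eq (P Q : Measure α) [IsProbabilityMeasure P]
    [IsProbabilityMeasure Q] :
    ∃ A : Set α, 1 / 2 * ∑' a, |P.real {a} - Q.real {a}| = P.real A - Q.real A := by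
  let A : Set α := {a | Q.real {a} < P.real {a}}
  have hdiff (B : Set α) : HasSum (B.indicator fun a ↦ P.real {a} - Q.real {a})
      (P.real B - Q.real B) := by
    simpa only [indicator_sub] using (hasSum_indicator_measureReal_singleton P B).sub
      (hasSum_indicator_measureReal_singleton Q B)
  have habs : HasSum (fun a ↦ |P.real {a} - Q.real {a}|)
      (2 * (P.real A - Q.real A) - (P.real univ - Q.real univ)) := by
    refine (((hdiff A).mul_left 2).sub (hdiff univ)).congr_fun fun a ↦ ?_
    by_cases ha : Q.real {a} < P.real {a}
    · rw [indicator_of_mem (show a ∈ A from ha), abs_of_pos (sub_pos.2 ha),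
        indicator_univ]
      ring
    · rw [indicator_of_notMem (show a ∉ A from ha), abs_of_nonpos (sub_nonpos.2 (not_lt.1 ha)),
        indicator_univ]
      ring
  exact ⟨A, by simp [habs.tsum_eq]⟩

end Countable

/-- Log-concavity of the mass function `i ↦ P {i}`, cross-multiplied from the form
"`P {i + 1} / P {i}` is antitone in `i`" so that vanishing masses need no separate treatment. -/
def IsLogConcave (P : Measure ℕ) : Prop :=
  ∀ ⦃i j⦄, i ≤ j → P.real {i} * P.real {j + 1} ≤ P.real {i + 1} * P.real {j}

lemma measureReal_comap_succ (P : Measure ℕ) (B : Set ℕ) :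
    (P.comap Nat.succ).real B = P.real (Nat.succ '' B) := by
  rw [measureReal_def, Measure.comap_apply _ Nat.succ_injective (fun _ _ ↦ .of_discrete) _
    .of_discrete, measureReal_def]

namespace IsLogConcave

variable {P : Measure ℕ} [IsFiniteMeasure P]

lemma mul_measureReal_Iic_le (hP : IsLogConcave P) (j : ℕ) :
    P.real {j + 1} * P.real (Iic j) ≤ P.real {j} * P.real (Ioc 0 (j + 1)) := by
  have himage : Nat.succ '' Iic j = Ioc 0 (j + 1) := by
    ext (_ | k) <;> simp
  rw [← himage, ← measureReal_comap_succ]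
  refine mul_measureReal_le_mul_measureReal fun i hi ↦ ?_
  simpa [measureReal_comap_succ, mul_comm] using hP hi

lemma mul_measureReal_Ioi_succ_le (hP : IsLogConcave P) (j : ℕ) :
    P.real {j} * P.real (Ioi (j + 1)) ≤ P.real {j + 1} * P.real (Ioi j) := by
  have himage : Nat.succ '' Ioi j = Ioi (j + 1) := by
    ext (_ | k) <;> simp
  rw [← himage, ← measureReal_comap_succ]
  refine mul_measureReal_le_mul_measureReal fun i hi ↦ ?_
  simpa [measureReal_comap_succ, mul_comm] using hP (mem_Ioi.1 hi).le

end IsLogConcave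

section Intervals

variable (P : Measure ℕ) [IsFiniteMeasure P] (A : Set ℕ) (j : ℕ)

lemma measureReal_inter_Iic_succ :
    P.real (A ∩ Iic (j + 1)) = P.real (A ∩ Iic j) + P.real (A ∩ {j + 1}) := by
  have hIic : Iic (j + 1) = Iic j ∪ {j + 1} := by ext; grind
  rw [hIic, inter_union_distrib_left, measureReal_union _ .of_discrete]
  exact Disjoint.inter_left' _ <| Disjoint.inter_right' _ <| by simp

lemma measureReal_inter_Ioi :
    P.real (A ∩ Ioi j) = P.real (A ∩ Ioi (j + 1)) + P.real (A ∩ {j + 1}) := by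
  have hIoi : Ioi j = Ioi (j + 1) ∪ {j + 1} := by ext; grind
  rw [hIoi, inter_union_distrib_left, measureReal_union _ .of_discrete]
  exact Disjoint.inter_left' _ <| Disjoint.inter_right' _ <| by simp

lemma measureReal_inter_Iic_add_inter_Ioi :
    P.real (A ∩ Iic j) + P.real (A ∩ Ioi j) = P.real A := by
  rw [← compl_Iic, ← sdiff_eq, measureReal_inter_add_sdiff .of_discrete]

end Intervals

/-- The covariance of the indicators of `A` and `{0, …, j}` under `P`, relative to the mass
`P {j}`. For Poisson `P` it solves Stein's equation for `A` up to a constant factor. -/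
noncomputable def covRatio (P : Measure ℕ) (A : Set ℕ) (j : ℕ) : ℝ :=
  (P.real (A ∩ Iic j) - P.real A * P.real (Iic j)) / P.real {j}

lemma covRatio_zero_mul (P : Measure ℕ) (A : Set ℕ) (h : P.real {0} ≠ 0) :
    covRatio P A 0 * P.real {0} = (A.indicator 1 0 - P.real A) * P.real {0} := by
  have hIic : Iic 0 = ({0} : Set ℕ) := Iic_bot
  rw [covRatio, div_mul_cancel₀ _ h, hIic, measureReal_inter_singleton]
  ring

lemma covRatio_succ_mul_sub (P : Measure ℕ) [IsFiniteMeasure P] (A : Set ℕ) (j : ℕ)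
    (h : P.real {j} ≠ 0) (h' : P.real {j + 1} ≠ 0) :
    covRatio P A (j + 1) * P.real {j + 1} - covRatio P A j * P.real {j}
      = (A.indicator 1 (j + 1) - P.real A) * P.real {j + 1} := by
  have hIic := measureReal_inter_Iic_succ P univ j
  simp only [univ_inter] at hIic
  rw [covRatio, covRatio, div_mul_cancel₀ _ h, div_mul_cancel₀ _ h', hIic,
    measureReal_inter_Iic_succ, measureReal_inter_singleton]
  ring

section CovRatio

variable (P : Measure ℕ) [IsProbabilityMeasure P] (A : Set ℕ) (j : ℕ)

lemma covRatio_eq_sub :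
    covRatio P A j = P.real (A ∩ Iic j) * (P.real (Ioi j) / P.real {j})
      - P.real (A ∩ Ioi j) * (P.real (Iic j) / P.real {j}) := by
  have huniv := measureReal_inter_Iic_add_inter_Ioi P univ j
  simp only [univ_inter, probReal_univ] at huniv
  rw [covRatio, ← measureReal_inter_Iic_add_inter_Ioi P A j, eq_sub_of_add_eq' huniv]
  ring

lemma covRatio_compl : covRatio P Aᶜ j = -covRatio P A j := by
  have hinter := measureReal_inter_add_sdiff (μ := P) (s := Iic j) (t := A) .of_discrete
  rw [sdiff_eq, inter_comm _ A, inter_comm _ Aᶜ] at hinter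
  rw [covRatio, covRatio, probReal_compl_eq_one_sub .of_discrete, ← hinter]
  ring

end CovRatio

namespace IsLogConcave

variable {P : Measure ℕ} [IsProbabilityMeasure P]

/- Only the atom of `A` at `j + 1` can make `covRatio P A` increase from `j` to `j + 1`: away from
it, log-concavity makes the increment nonpositive. -/
lemma covRatio_succ_sub_le (hP : IsLogConcave P) (hpos : ∀ i, 0 < P.real {i}) (A : Set ℕ)
    (j : ℕ) : covRatio P A (j + 1) - covRatio P A j ≤ P.real (Ioi 0) := by
  have hIoi : P.real (Ioi 0) = P.real (Ioc 0 (j + 1)) + P.real (Ioi (j + 1)) := by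
    rw [← measureReal_union Ioc_disjoint_Ioi_same .of_discrete,
      Ioc_union_Ioi_eq_Ioi (Nat.zero_le _)]
  have hhead : P.real (Iic j) / P.real {j} ≤ P.real (Ioc 0 (j + 1)) / P.real {j + 1} := by
    rw [div_le_div_iff₀ (hpos _) (hpos _)]
    linarith [hP.mul_measureReal_Iic_le j]
  have hhead' : P.real (Iic j) / P.real {j} ≤ P.real (Iic (j + 1)) / P.real {j + 1} :=
    hhead.trans <|
      div_le_div_of_nonneg_right (measureReal_mono Ioc_subset_Iic_self) measureReal_nonneg
  have htail : P.real (Ioi (j + 1)) / P.real {j + 1} ≤ P.real (Ioi j) / P.real {j} := by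
    rw [div_le_div_iff₀ (hpos _) (hpos _)]
    linarith [hP.mul_measureReal_Ioi_succ_le j]
  have hatom : P.real (A ∩ {j + 1}) ≤ P.real {j + 1} := measureReal_mono inter_subset_right
  calc covRatio P A (j + 1) - covRatio P A j
      = P.real (A ∩ {j + 1}) *
            (P.real (Ioi (j + 1)) / P.real {j + 1} + P.real (Iic j) / P.real {j})
        + P.real (A ∩ Iic j) *
            (P.real (Ioi (j + 1)) / P.real {j + 1} - P.real (Ioi j) / P.real {j})
        + P.real (A ∩ Ioi (j + 1)) *
            (P.real (Iic j) / P.real {j} - P.real (Iic (j + 1)) / P.real {j + 1}) := by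
        rw [covRatio_eq_sub, covRatio_eq_sub, measureReal_inter_Iic_succ,
          measureReal_inter_Ioi P A j]
        ring
    _ ≤ P.real (A ∩ {j + 1}) *
            (P.real (Ioi (j + 1)) / P.real {j + 1} + P.real (Iic j) / P.real {j}) + 0 + 0 := by
        gcongr
        · exact mul_nonpos_of_nonneg_of_nonpos measureReal_nonneg (sub_nonpos.2 htail)
        · exact mul_nonpos_of_nonneg_of_nonpos measureReal_nonneg (sub_nonpos.2 hhead')
    _ ≤ P.real {j + 1} *
          (P.real (Ioi (j + 1)) / P.real {j + 1} + P.real (Ioc 0 (j + 1)) / P.real {j + 1}) := by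
        rw [add_zero, add_zero]
        gcongr
    _ = P.real (Ioi 0) := by
        have := (hpos (j + 1)).ne'
        rw [hIoi]
        field_simp
        ring

lemma abs_covRatio_succ_sub_le (hP : IsLogConcave P) (hpos : ∀ i, 0 < P.real {i}) (A : Set ℕ)
    (j : ℕ) : |covRatio P A (j + 1) - covRatio P A j| ≤ P.real (Ioi 0) := by
  have hcompl := hP.covRatio_succ_sub_le hpos Aᶜ j
  rw [covRatio_compl, covRatio_compl] at hcompl
  exact abs_le.2 ⟨by linarith, hP.covRatio_succ_sub_le hpos A j⟩

end IsLogConcave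

lemma lipschitzWith_nat_of_dist_succ_le {X : Type*} [PseudoMetricSpace X] {f : ℕ → X} {C : ℝ≥0}
    (h : ∀ n, dist (f n) (f (n + 1)) ≤ C) : LipschitzWith C f := by
  have hle {m n : ℕ} (hmn : m ≤ n) : dist (f m) (f n) ≤ C * dist m n := by
    refine (dist_le_Ico_sum_of_dist_le (f := f) hmn fun {k} _ _ ↦ h k).trans_eq ?_
    rw [dist_comm, Nat.dist_eq, abs_of_nonneg (by simpa using hmn)]
    simp [Nat.cast_sub hmn, mul_comm]
  refine .of_dist_le_mul fun m n ↦ ?_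
  rcases le_total m n with hmn | hmn
  · exact hle hmn
  · simpa only [dist_comm] using hle hmn

lemma succ_mul_poissonMeasure_real_singleton (r : ℝ≥0) (i : ℕ) :
    (i + 1) * (poissonMeasure r).real {i + 1} = r * (poissonMeasure r).real {i} := by
  simp only [poissonMeasure_real_singleton, Nat.factorial_succ]
  push_cast
  field_simp
  ring

lemma isLogConcave_poissonMeasure (r : ℝ≥0) : IsLogConcave (poissonMeasure r) := by
  intro i j hij
  have hi := succ_mul_poissonMeasure_real_singleton r i
  have hj := succ_mul_poissonMeasure_real_singleton r j
  have hle : ((i : ℝ) + 1) ≤ j + 1 := by gcongr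
  refine le_of_mul_le_mul_left ?_ (Nat.cast_add_one_pos (α := ℝ) j)
  calc (j + 1) * ((poissonMeasure r).real {i} * (poissonMeasure r).real {j + 1})
      = (i + 1) * ((poissonMeasure r).real {i + 1} * (poissonMeasure r).real {j}) := by
        linear_combination (poissonMeasure r).real {i} * hj - (poissonMeasure r).real {j} * hi
    _ ≤ (j + 1) * ((poissonMeasure r).real {i + 1} * (poissonMeasure r).real {j}) := by gcongr

lemma poissonMeasure_real_Ioi_zero (r : ℝ≥0) :
    (poissonMeasure r).real (Ioi 0) = 1 - Real.exp (-r) := by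
  have hcompl : (Ioi 0 : Set ℕ) = {0}ᶜ := by ext; simp [Nat.pos_iff_ne_zero]
  rw [hcompl, probReal_compl_eq_one_sub .of_discrete, poissonMeasure_real_singleton]
  simp

lemma one_sub_exp_neg_div_le_min {x : ℝ} (hx : 0 < x) : (1 - Real.exp (-x)) / x ≤ min 1 x⁻¹ := by
  refine le_min ?_ ?_
  · rw [div_le_one hx]
    linarith [Real.one_sub_le_exp_neg x]
  · rw [div_eq_mul_inv]
    exact mul_le_of_le_one_left (inv_nonneg.2 hx.le) (by linarith [Real.exp_pos (-x)])

/-- The solution of Stein's equation for the Poisson law of mean `r` and the set `A`. The index is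
shifted by one from the usual convention: `poissonStein r A j` is the solution at `j + 1`. -/
noncomputable def poissonStein (r : ℝ≥0) (A : Set ℕ) (j : ℕ) : ℝ :=
  covRatio (poissonMeasure r) A j / r

-- At `j = 0` the value `poissonStein r A (0 - 1)` is junk, but its coefficient vanishes.
lemma poissonStein_equation {r : ℝ≥0} (hr : 0 < r) (A : Set ℕ) (j : ℕ) :
    r * poissonStein r A j - j * poissonStein r A (j - 1)
      = A.indicator 1 j - (poissonMeasure r).real A := by
  have hr' : (r : ℝ) ≠ 0 := (NNReal.coe_pos.2 hr).ne'
  have hpos (i : ℕ) := poissonMeasure_real_singleton_pos i hr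
  refine mul_right_cancel₀ (hpos j).ne' ?_
  cases j with
  | zero =>
    rw [← covRatio_zero_mul _ _ (hpos 0).ne', poissonStein, mul_div_cancel₀ _ hr', Nat.cast_zero,
      zero_mul, sub_zero]
  | succ j =>
    have hmass := succ_mul_poissonMeasure_real_singleton r j
    rw [← covRatio_succ_mul_sub _ _ _ (hpos j).ne' (hpos (j + 1)).ne', Nat.add_sub_cancel,
      poissonStein, poissonStein]
    push_cast
    field_simp
    linear_combination -covRatio (poissonMeasure r) A j * hmass

lemma lipschitzWith_poissonStein {r : ℝ≥0} (hr : 0 < r) (A : Set ℕ) :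
    LipschitzWith (min 1 r⁻¹) (poissonStein r A) := by
  refine lipschitzWith_nat_of_dist_succ_le fun j ↦ ?_
  have hr' : (0 : ℝ) < r := hr
  rw [dist_comm, Real.dist_eq, poissonStein, poissonStein, ← sub_div, abs_div, abs_of_pos hr']
  calc |covRatio (poissonMeasure r) A (j + 1) - covRatio (poissonMeasure r) A j| / r
      ≤ (1 - Real.exp (-r)) / r := by
        gcongr
        rw [← poissonMeasure_real_Ioi_zero]
        exact (isLogConcave_poissonMeasure r).abs_covRatio_succ_sub_le
          (poissonMeasure_real_singleton_pos · hr) A j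
    _ ≤ (min 1 r⁻¹ : ℝ≥0) := by
        simpa using one_sub_exp_neg_div_le_min hr'

section Coupling

variable {Ω Ω' : Type*} [MeasurableSpace Ω] [MeasurableSpace Ω'] {μ : Measure Ω} {ν : Measure Ω'}

lemma integrable_comp_of_le [IsFiniteMeasure μ] {X : Ω → ℕ} (hX : Measurable X) {n : ℕ}
    (hn : ∀ ω, X ω ≤ n) (f : ℕ → ℝ) : Integrable (fun ω ↦ f (X ω)) μ := by
  refine .of_bound ((measurable_of_countable f).comp hX).aestronglyMeasurable
    (∑ k ∈ Finset.range (n + 1), ‖f k‖) (.of_forall fun ω ↦ ?_)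
  exact Finset.single_le_sum (f := fun k ↦ ‖f k‖) (fun _ _ ↦ norm_nonneg _)
    (Finset.mem_range_succ_iff.2 (hn ω))

lemma identDistrib_of_forall_measure_eq {α : Type*} [MeasurableSpace α]
    [MeasurableSingletonClass α] [Countable α] {X : Ω' → α} {Y : Ω → α} (hX : Measurable X)
    (hY : Measurable Y) (h : ∀ a, ν {ω | X ω = a} = μ {ω | Y ω = a}) : IdentDistrib X Y ν μ where
  aemeasurable_fst := hX.aemeasurable
  aemeasurable_snd := hY.aemeasurable
  map_eq := by
    refine Measure.ext_of_singleton fun a ↦ ?_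
    rw [Measure.map_apply hX (.singleton a), Measure.map_apply hY (.singleton a)]
    exact h a

lemma setIntegral_comp_pred_eq {S : Set Ω} (hS : MeasurableSet S) {W : Ω → ℕ}
    (hW : Measurable W) (hWS : ∀ ω ∈ S, 0 < W ω) {V : Ω' → ℕ} (hV : Measurable V)
    (h : ∀ m, ν {ω | V ω = m} * μ S = μ ({ω | W ω = m + 1} ∩ S)) (f : ℕ → ℝ) :
    ∫ ω in S, f (W ω - 1) ∂μ = μ.real S * ∫ ω, f (V ω) ∂ν := by
  have hpred : Measurable fun ω ↦ W ω - 1 := hW.sub_const 1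
  have hmap : (μ.restrict S).map (fun ω ↦ W ω - 1) = μ S • ν.map V := by
    refine Measure.ext_of_singleton fun m ↦ ?_
    have hset : (fun ω ↦ W ω - 1) ⁻¹' {m} ∩ S = {ω | W ω = m + 1} ∩ S := by
      ext ω
      refine and_congr_left fun hω ↦ ?_
      have := hWS ω hω
      change W ω - 1 = m ↔ W ω = m + 1
      omega
    rw [Measure.map_apply hpred (.singleton m), Measure.restrict_apply' hS, hset, ← h m,
      Measure.smul_apply, Measure.map_apply hV (.singleton m), smul_eq_mul, mul_comm,
      preimage]
    simp only [mem_singleton_iff]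
  have hf {κ : Measure ℕ} : AEStronglyMeasurable f κ :=
    (measurable_of_countable f).aestronglyMeasurable
  rw [← integral_map hpred.aemeasurable hf, hmap, integral_smul_measure,
    integral_map hV.aemeasurable hf, measureReal_def, smul_eq_mul]

lemma integral_comp_sub_comp_le {C : ℝ≥0} {f : ℕ → ℝ} (hf : LipschitzWith C f)
    {X Y : Ω' → ℕ} (hX : Measurable X) (hY : Measurable Y) (hfX : Integrable (fun ω ↦ f (X ω)) ν)
    (hXY : Integrable (fun ω ↦ |(X ω : ℝ) - Y ω|) ν) :
    ∫ ω, f (X ω) ∂ν - ∫ ω, f (Y ω) ∂ν ≤ C * ∫ ω, |(X ω : ℝ) - Y ω| ∂ν := by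
  have hle (ω : Ω') : |f (X ω) - f (Y ω)| ≤ C * |(X ω : ℝ) - Y ω| := hf.dist_le_mul _ _
  have hfm := measurable_of_countable f
  have hsub : Integrable (fun ω ↦ f (X ω) - f (Y ω)) ν :=
    (hXY.const_mul C).mono' ((hfm.comp hX).sub (hfm.comp hY)).aestronglyMeasurable
      (.of_forall hle)
  have hfY : Integrable (fun ω ↦ f (Y ω)) ν := by
    simpa [Pi.sub_def] using hfX.sub hsub
  rw [← integral_sub hfX hfY, ← integral_const_mul]
  exact integral_mono hsub (hXY.const_mul C) fun ω ↦ (le_abs_self _).trans (hle ω)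

end Coupling

section Bernoulli

variable {Ω ι : Type*} [MeasurableSpace Ω] {μ : Measure Ω} {I : Finset ι} {Z : ι → Ω → ℕ}

lemma integrable_comp_sum [IsFiniteMeasure μ] (hZmeas : ∀ i ∈ I, Measurable (Z i))
    (hZ01 : ∀ i ∈ I, ∀ ω, Z i ω = 0 ∨ Z i ω = 1) (f : ℕ → ℝ) :
    Integrable (fun ω ↦ f (∑ i ∈ I, Z i ω)) μ := by
  refine integrable_comp_of_le (Finset.measurable_sum _ hZmeas) (n := I.card) (fun ω ↦ ?_) f
  rw [Finset.card_eq_sum_ones]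
  exact Finset.sum_le_sum fun i hi ↦ by have := hZ01 i hi ω; omega

lemma integral_sum_mul_eq_sum_setIntegral (hZmeas : ∀ i ∈ I, Measurable (Z i))
    (hZ01 : ∀ i ∈ I, ∀ ω, Z i ω = 0 ∨ Z i ω = 1) {h : Ω → ℝ} (hh : Integrable h μ) :
    ∫ ω, (∑ i ∈ I, Z i ω : ℕ) * h ω ∂μ = ∑ i ∈ I, ∫ ω in {ω | Z i ω = 1}, h ω ∂μ := by
  have hset (i : ι) (hi : i ∈ I) : MeasurableSet {ω | Z i ω = 1} :=
    hZmeas i hi (.singleton 1)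
  have hmul (ω : Ω) :
      (∑ i ∈ I, Z i ω : ℕ) * h ω = ∑ i ∈ I, {ω | Z i ω = 1}.indicator h ω := by
    rw [Nat.cast_sum, Finset.sum_mul]
    refine Finset.sum_congr rfl fun i hi ↦ ?_
    rcases hZ01 i hi ω with hz | hz <;> simp [hz]
  simp only [hmul]
  rw [integral_finsetSum _ fun i hi ↦ hh.indicator (hset i hi)]
  exact Finset.sum_congr rfl fun i hi ↦ integral_indicator (hset i hi)

lemma map_sum_eq_poissonMeasure_zero [IsProbabilityMeasure μ]
    (hZ01 : ∀ i ∈ I, ∀ ω, Z i ω = 0 ∨ Z i ω = 1) (hZ : ∀ i ∈ I, μ {ω | Z i ω = 1} = 0) :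
    μ.map (fun ω ↦ ∑ i ∈ I, Z i ω) = poissonMeasure 0 := by
  have hae : ∀ᵐ ω ∂μ, ∀ i ∈ I, Z i ω ≠ 1 := by
    rw [Finset.eventually_all]
    exact fun i hi ↦ by simpa [ae_iff] using hZ i hi
  have hzero : (fun ω ↦ ∑ i ∈ I, Z i ω) =ᵐ[μ] fun _ ↦ 0 := by
    filter_upwards [hae] with ω hω
    exact Finset.sum_eq_zero fun i hi ↦ (hZ01 i hi ω).resolve_right (hω i hi)
  rw [Measure.map_congr hzero, Measure.map_const, measure_univ, one_smul]
  refine Measure.ext_of_measureReal_singleton fun m ↦ ?_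
  rw [poissonMeasure_real_singleton]
  cases m <;> simp [measureReal_def]

end Bernoulli

lemma integral_poissonStein_comp {Ω : Type*} [MeasurableSpace Ω] {μ : Measure Ω}
    [IsProbabilityMeasure μ] {W : Ω → ℕ} (hW : Measurable W) {r : ℝ≥0} (hr : 0 < r) (A : Set ℕ) :
    ∫ ω, (r * poissonStein r A (W ω) - W ω * poissonStein r A (W ω - 1)) ∂μ
      = (μ.map W).real A - (poissonMeasure r).real A := by
  have hA : MeasurableSet (W ⁻¹' A) := hW .of_discrete
  have hind : Integrable ((W ⁻¹' A).indicator (1 : Ω → ℝ)) μ :=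
    (integrable_const 1).indicator hA
  simp only [poissonStein_equation hr]
  change ∫ ω, ((W ⁻¹' A).indicator 1 ω - (poissonMeasure r).real A) ∂μ = _
  rw [integral_sub hind (integrable_const _), integral_indicator_one hA, integral_const,
    map_measureReal_apply hW .of_discrete]
  simp

lemma measureReal_map_sum_sub_poissonMeasure {Ω ι : Type*} [MeasurableSpace Ω] {μ : Measure Ω}
    [IsProbabilityMeasure μ] {I : Finset ι} {Z : ι → Ω → ℕ} (hZmeas : ∀ i ∈ I, Measurable (Z i))
    (hZ01 : ∀ i ∈ I, ∀ ω, Z i ω = 0 ∨ Z i ω = 1) {W : Ω → ℕ} (hW : W = fun ω ↦ ∑ i ∈ I, Z i ω)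
    {r : ℝ≥0} (hr : 0 < r) (hrsum : r = ∑ i ∈ I, μ.real {ω | Z i ω = 1}) (A : Set ℕ) :
    (μ.map W).real A - (poissonMeasure r).real A
      = ∑ i ∈ I, (μ.real {ω | Z i ω = 1} * ∫ ω, poissonStein r A (W ω) ∂μ
          - ∫ ω in {ω | Z i ω = 1}, poissonStein r A (W ω - 1) ∂μ) := by
  have hWmeas : Measurable W := hW ▸ Finset.measurable_sum _ hZmeas
  have hWint := integrable_comp_sum (μ := μ) hZmeas hZ01
  have hgW : Integrable (fun ω ↦ poissonStein r A (W ω)) μ := hW ▸ hWint _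
  have hgpred : Integrable (fun ω ↦ poissonStein r A (W ω - 1)) μ :=
    hW ▸ hWint fun k ↦ poissonStein r A (k - 1)
  have hmul : Integrable (fun ω ↦ W ω * poissonStein r A (W ω - 1)) μ :=
    hW ▸ hWint fun k ↦ k * poissonStein r A (k - 1)
  rw [← integral_poissonStein_comp hWmeas hr, integral_sub (hgW.const_mul _) hmul,
    integral_const_mul, Finset.sum_sub_distrib, ← Finset.sum_mul, ← hrsum,
    ← integral_sum_mul_eq_sum_setIntegral hZmeas hZ01 hgpred, hW]

lemma mul_integral_sub_setIntegral_pred_le {Ω Ω' : Type*} [MeasurableSpace Ω] [MeasurableSpace Ω']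
    {μ : Measure Ω} {ν : Measure Ω'} {C : ℝ≥0} {f : ℕ → ℝ} (hf : LipschitzWith C f)
    {S : Set Ω} (hS : MeasurableSet S) {W : Ω → ℕ} (hW : Measurable W) (hWS : ∀ ω ∈ S, 0 < W ω)
    (hfW : Integrable (fun ω ↦ f (W ω)) μ) {U V : Ω' → ℕ} (hUmeas : Measurable U)
    (hVmeas : Measurable V) (hU : ∀ m, ν {ω | U ω = m} = μ {ω | W ω = m})
    (hV : ∀ m, ν {ω | V ω = m} * μ S = μ ({ω | W ω = m + 1} ∩ S))
    (hint : Integrable (fun ω ↦ |(U ω : ℝ) - V ω|) ν) :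
    μ.real S * ∫ ω, f (W ω) ∂μ - ∫ ω in S, f (W ω - 1) ∂μ
      ≤ C * (μ.real S * ∫ ω, |(U ω : ℝ) - V ω| ∂ν) := by
  have hUW : IdentDistrib (fun ω ↦ f (U ω)) (fun ω ↦ f (W ω)) ν μ :=
    (identDistrib_of_forall_measure_eq hUmeas hW hU).comp (measurable_of_countable f)
  rw [setIntegral_comp_pred_eq hS hW hWS hVmeas hV, ← hUW.integral_eq, ← mul_sub, mul_left_comm]
  gcongr
  exact integral_comp_sub_comp_le hf hUmeas hVmeas (hUW.integrable_iff.2 hfW) hint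

lemma poissonPMF_eq_measureReal (r : ℝ≥0) (m : ℕ) :
    poissonPMF r m = (poissonMeasure r).real {m} :=
  (poissonMeasure_real_singleton r m).symm

theorem chen_stein_general {Ω ι : Type*} {Ω' : ι → Type*} [MeasurableSpace Ω]
    [∀ i, MeasurableSpace (Ω' i)] (μ : Measure Ω) [IsProbabilityMeasure μ]
    (ν : ∀ i, Measure (Ω' i))
    (I : Finset ι) (Z : ι → Ω → ℕ) (p : ι → ℝ)
    (hZmeas : ∀ i ∈ I, Measurable (Z i))
    (hZ01 : ∀ i ∈ I, ∀ ω : Ω, Z i ω = 0 ∨ Z i ω = 1)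
    (hZp : ∀ i ∈ I, (μ {ω | Z i ω = 1}).toReal = p i)
    (W : Ω → ℕ) (hW : W = fun ω => ∑ i ∈ I, Z i ω)
    (lam : ℝ) (hlam : lam = ∑ i ∈ I, p i)
    (U V : ∀ i, Ω' i → ℕ)
    (hUmeas : ∀ i ∈ I, Measurable (U i)) (hVmeas : ∀ i ∈ I, Measurable (V i))
    (hU : ∀ i ∈ I, ∀ m : ℕ, ν i {ω | U i ω = m} = μ {ω | W ω = m})
    (hV : ∀ i ∈ I, ∀ m : ℕ,
      ν i {ω | V i ω = m} * μ {ω | Z i ω = 1} = μ ({ω | W ω = m + 1} ∩ {ω | Z i ω = 1}))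
    (hInt : ∀ i ∈ I, Integrable (fun ω => |(U i ω : ℝ) - (V i ω : ℝ)|) (ν i)) :
    (1 / 2) * ∑' m : ℕ, |(μ {ω | W ω = m}).toReal - poissonPMF lam m| ≤
      min 1 lam⁻¹ * ∑ i ∈ I, p i * ∫ ω, |(U i ω : ℝ) - (V i ω : ℝ)| ∂(ν i) := by
  have hp (i : ι) (hi : i ∈ I) : 0 ≤ p i := hZp i hi ▸ ENNReal.toReal_nonneg
  have hWmeas : Measurable W := hW ▸ Finset.measurable_sum _ hZmeas
  lift lam to ℝ≥0 using hlam ▸ Finset.sum_nonneg hp with r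
  have hlaw (m : ℕ) : (μ {ω | W ω = m}).toReal = (μ.map W).real {m} :=
    (map_measureReal_apply hWmeas (.singleton m)).symm
  simp only [hlaw, poissonPMF_eq_measureReal]
  rcases eq_zero_or_pos r with rfl | hr
  · have hp0 : ∀ i ∈ I, p i = 0 := (Finset.sum_eq_zero_iff_of_nonneg hp).1 hlam.symm
    have hZ (i : ι) (hi : i ∈ I) : μ {ω | Z i ω = 1} = 0 :=
      (measureReal_eq_zero_iff).1 ((hZp i hi).trans (hp0 i hi))
    simp [hW, map_sum_eq_poissonMeasure_zero hZ01 hZ]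
  · have := Measure.isProbabilityMeasure_map (μ := μ) hWmeas.aemeasurable
    obtain ⟨A, hA⟩ := exists_half_tsum_abs_measureReal_sub_eq (μ.map W) (poissonMeasure r)
    rw [hA, measureReal_map_sum_sub_poissonMeasure hZmeas hZ01 hW hr
      (hlam.trans (Finset.sum_congr rfl fun i hi ↦ (hZp i hi).symm)), Finset.mul_sum]
    refine Finset.sum_le_sum fun i hi ↦ ?_
    have hWpos (ω : Ω) (hω : Z i ω = 1) : 0 < W ω := by
      rw [hW]
      exact Finset.sum_pos' (fun _ _ ↦ Nat.zero_le _) ⟨i, hi, hω ▸ Nat.one_pos⟩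
    rw [← hZp i hi]
    exact mul_integral_sub_setIntegral_pred_le (lipschitzWith_poissonStein hr A)
      (hZmeas i hi (.singleton 1)) hWmeas hWpos (hW ▸ integrable_comp_sum hZmeas hZ01 _)
      (hUmeas i hi) (hVmeas i hi) (hU i hi) (hV i hi) (hInt i hi)

/-- **Chen–Stein approximation.** Let `W = Σ_{i ∈ I} Z_i` be a sum of Bernoulli random
variables `Z_i` with parameters `p_i`, and `λ = Σ_{i ∈ I} p_i`. Suppose for each `i ∈ I` there
is a coupled pair `(U_i, V_i)` with `U_i` distributed as `W` and `V_i + 1` distributed as `W`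
conditioned on `Z_i = 1`. Then
`d_TV(W, Po(λ)) ≤ min{1, λ⁻¹} · Σ_{i ∈ I} p_i · E|U_i - V_i|`. -/
theorem chen_stein {Ω ι : Type*} [MeasurableSpace Ω] (μ : Measure Ω)
    [IsProbabilityMeasure μ]
    (I : Finset ι) (Z : ι → Ω → ℕ) (p : ι → ℝ)
    (hZmeas : ∀ i ∈ I, Measurable (Z i))
    (hZ01 : ∀ i ∈ I, ∀ ω : Ω, Z i ω = 0 ∨ Z i ω = 1)
    (hZp : ∀ i ∈ I, (μ {ω | Z i ω = 1}).toReal = p i)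
    (W : Ω → ℕ) (hW : W = fun ω => ∑ i ∈ I, Z i ω)
    (lam : ℝ) (hlam : lam = ∑ i ∈ I, p i)
    (U V : ι → Ω → ℕ)
    (hUmeas : ∀ i ∈ I, Measurable (U i)) (hVmeas : ∀ i ∈ I, Measurable (V i))
    (hU : ∀ i ∈ I, ∀ m : ℕ, μ {ω | U i ω = m} = μ {ω | W ω = m})
    (hV : ∀ i ∈ I, ∀ m : ℕ,
      μ {ω | V i ω = m} * μ {ω | Z i ω = 1} = μ ({ω | W ω = m + 1} ∩ {ω | Z i ω = 1}))
    (hInt : ∀ i ∈ I, Integrable (fun ω => |(U i ω : ℝ) - (V i ω : ℝ)|) μ) :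
    (1 / 2) * ∑' m : ℕ, |(μ {ω | W ω = m}).toReal - poissonPMF lam m| ≤
      min 1 lam⁻¹ * ∑ i ∈ I, p i * ∫ ω, |(U i ω : ℝ) - (V i ω : ℝ)| ∂μ := by
  exact chen_stein_general μ (fun _ ↦ μ) I Z p hZmeas hZ01 hZp W hW lam hlam U V hUmeas hVmeas hU hV
    hInt
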